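/- arXiv:1306.0852 — 2 statements merged into one kernel-verified Lean document; each statement's English description precedes it below -/
import Mathlib

section
/- Let f, g : [0,∞) → [0,∞) with f·g Lebesgue integrable on [a,b], where 0 < a < b < ∞. Let q > 1 and (α₁,m₁), (α₂,m₂) ∈ (0,1]². If f^q is (α₁,m₁)-GA-convex on [0, max{a^{1/m₁}, b}] and g^{q/(q−1)} is (α₂,m₂)-GA-convex on [0, max{a^{1/m₂}, b}], then ∫_a^b f(x)·g(x) dx ≤ (ln b − ln a) · { m₁·f^q(a^{1/m₁})·L(a,b) + G(α₁,1)·[f^q(b) − m₁·f^q(a^{1/m₁})] }^{1/q} · { m₂·g^{q/(q−1)}(a^{1/m₂})·L(a,b) + G(α₂,1)·[g^{q/(q−1)}(b) − m₂·g^{q/(q−1)}(a^{1/m₂})] }^{1−1/q}. -/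
open Real MeasureTheory Set

/-- The logarithmic mean `L(x,y) = (y - x)/(ln y - ln x)`. -/
noncomputable def L (x y : ℝ) : ℝ := (y - x) / (Real.log y - Real.log x)

/-- `G(α,ℓ) = ∫_0^1 t^α a^{ℓ(1-t)} b^{ℓ t} dt` (for parameters `a, b`). -/
noncomputable def G (a b α ℓ : ℝ) : ℝ :=
  ∫ t in (0:ℝ)..1, t ^ α * a ^ (ℓ * (1 - t)) * b ^ (ℓ * t)

/-- A function `h` is `(α,m)`-GA-convex on `[0,c]` if
`h(x^λ y^{m(1-λ)}) ≤ λ^α h(x) + m(1-λ^α) h(y)` for all `x, y ∈ [0,c]`, `λ ∈ [0,1]`. -/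
def GAConvexOn (α m c : ℝ) (h : ℝ → ℝ) : Prop :=
  ∀ x ∈ Icc (0:ℝ) c, ∀ y ∈ Icc (0:ℝ) c, ∀ l ∈ Icc (0:ℝ) 1,
    h (x ^ l * y ^ (m * (1 - l))) ≤ l ^ α * h x + m * (1 - l ^ α) * h y

/-- A function `h` is `(α,m)`-GA-concave on `[0,c]` if
`h(x^λ y^{m(1-λ)}) ≥ λ^α h(x) + m(1-λ^α) h(y)` for all `x, y ∈ [0,c]`, `λ ∈ [0,1]`. -/
def GAConcaveOn (α m c : ℝ) (h : ℝ → ℝ) : Prop :=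
  ∀ x ∈ Icc (0:ℝ) c, ∀ y ∈ Icc (0:ℝ) c, ∀ l ∈ Icc (0:ℝ) 1,
    l ^ α * h x + m * (1 - l ^ α) * h y ≤ h (x ^ l * y ^ (m * (1 - l)))

/-- The logarithmic parameter of `x` relative to `a, b`. -/
noncomputable def tauP (a b x : ℝ) : ℝ := (Real.log x - Real.log a) / (Real.log b - Real.log a)

/-- The majorant coming from GA-convexity. -/
noncomputable def majP (a b α m A B x : ℝ) : ℝ :=
  tauP a b x ^ α * A + m * (1 - tauP a b x ^ α) * B

lemma tauP_mem {a b x : ℝ} (ha : 0 < a) (hab : a < b) (hx : x ∈ Icc a b) :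
    tauP a b x ∈ Icc (0:ℝ) 1 := by
  have hd : 0 < Real.log b - Real.log a := sub_pos.2 (Real.log_lt_log ha hab)
  have h1 : Real.log a ≤ Real.log x := Real.log_le_log ha hx.1
  have h2 : Real.log x ≤ Real.log b := Real.log_le_log (ha.trans_le hx.1) hx.2
  unfold tauP
  constructor
  · apply div_nonneg <;> linarith
  · rw [div_le_one hd]; linarith

lemma tauP_cont {a b : ℝ} (ha : 0 < a) : ContinuousOn (tauP a b) (Icc a b) := by
  unfold tauP
  refine ContinuousOn.div_const (ContinuousOn.sub (ContinuousOn.log continuousOn_id ?_)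
    continuousOn_const) _
  intro x hx
  exact (ha.trans_le hx.1).ne'

lemma majP_cont {a b α m A B : ℝ} (ha : 0 < a) (hα : 0 < α) :
    ContinuousOn (majP a b α m A B) (Icc a b) := by
  have h : ContinuousOn (fun x => tauP a b x ^ α) (Icc a b) :=
    (tauP_cont ha).rpow_const (fun x _ => Or.inr hα.le)
  unfold majP
  fun_prop

lemma le_majP {a b α m : ℝ} {h : ℝ → ℝ} (ha : 0 < a) (hab : a < b) (hm : 0 < m)
    (hc : GAConvexOn α m (max (a ^ (1/m)) b) h) {x : ℝ} (hx : x ∈ Icc a b) :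
    h x ≤ majP a b α m (h b) (h (a ^ (1/m))) x := by
  have hb : 0 < b := ha.trans hab
  have hd : 0 < Real.log b - Real.log a := sub_pos.2 (Real.log_lt_log ha hab)
  have key := hc b ⟨hb.le, le_max_right _ _⟩ (a ^ (1/m))
    ⟨Real.rpow_nonneg ha.le _, le_max_left _ _⟩ _ (tauP_mem ha hab hx)
  have hxe : b ^ tauP a b x * (a ^ (1/m)) ^ (m * (1 - tauP a b x)) = x := by
    rw [← Real.rpow_mul ha.le, Real.rpow_def_of_pos hb, Real.rpow_def_of_pos ha, ← Real.exp_add]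
    have : Real.log b * tauP a b x + Real.log a * (1 / m * (m * (1 - tauP a b x)))
        = Real.log x := by
      unfold tauP
      field_simp
      ring
    rw [this, Real.exp_log (ha.trans_le hx.1)]
  rw [hxe] at key
  exact key

lemma subst_int {a b : ℝ} (ha : 0 < a) (hab : a < b) {φ : ℝ → ℝ} (hφ : Continuous φ) :
    ∫ x in a..b, φ (tauP a b x) =
      (Real.log b - Real.log a) * ∫ t in (0:ℝ)..1, φ t * (a ^ (1 - t) * b ^ t) := by
  have hb : 0 < b := ha.trans hab
  have hd : 0 < Real.log b - Real.log a := sub_pos.2 (Real.log_lt_log ha hab)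
  set d := Real.log b - Real.log a with hd_def
  have e : ∀ t : ℝ, a ^ (1 - t) * b ^ t = Real.exp (Real.log a + d * t) := by
    intro t
    rw [Real.rpow_def_of_pos hb, Real.rpow_def_of_pos ha, ← Real.exp_add, hd_def]
    congr 1; ring
  have hder : ∀ t : ℝ, HasDerivAt (fun t => Real.exp (Real.log a + d * t))
      (Real.exp (Real.log a + d * t) * d) t := by
    intro t
    have := (((hasDerivAt_id t).const_mul d).const_add (Real.log a)).exp
    simpa using this
  have ht : ∀ t, tauP a b (Real.exp (Real.log a + d * t)) = t := by
    intro t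
    unfold tauP
    rw [Real.log_exp, ← hd_def]
    field_simp
    ring
  have hpos : ∀ t, Real.exp (Real.log a + d * t) ≠ 0 := fun t => (Real.exp_pos _).ne'
  have h := intervalIntegral.integral_comp_mul_deriv' (a := 0) (b := 1)
    (f := fun t => Real.exp (Real.log a + d * t))
    (f' := fun t => Real.exp (Real.log a + d * t) * d) (g := fun x => φ (tauP a b x))
    (fun t _ => hder t) (by fun_prop) (by
      refine hφ.comp_continuousOn ?_
      unfold tauP
      refine ContinuousOn.div_const (ContinuousOn.sub (ContinuousOn.log continuousOn_id ?_)
        continuousOn_const) _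
      rintro x ⟨t, _, rfl⟩
      exact hpos t)
  have e0 : Real.exp (Real.log a + d * 0) = a := by simp [Real.exp_log ha]
  have e1 : Real.exp (Real.log a + d * 1) = b := by simp [hd_def, Real.exp_log hb]
  simp only [Function.comp_def, ht, e0, e1] at h
  rw [← h, ← intervalIntegral.integral_const_mul]
  refine intervalIntegral.integral_congr fun t _ => ?_
  simp only [e]
  ring

lemma int_weight {a b : ℝ} (ha : 0 < a) (hab : a < b) :
    ∫ t in (0:ℝ)..1, a ^ (1 - t) * b ^ t = L a b := by
  have hd : 0 < Real.log b - Real.log a := sub_pos.2 (Real.log_lt_log ha hab)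
  have h := subst_int ha hab (φ := fun _ => 1) continuous_const
  simp only [intervalIntegral.integral_const, one_mul, smul_eq_mul, mul_one] at h
  unfold L
  rw [h]
  field_simp

lemma int_majP {a b α m A B : ℝ} (ha : 0 < a) (hab : a < b) (hα : 0 < α) :
    ∫ x in a..b, majP a b α m A B x =
      (Real.log b - Real.log a) * (m * B * L a b + G a b α 1 * (A - m * B)) := by
  have hb : 0 < b := ha.trans hab
  have hc : Continuous fun t : ℝ => t ^ α := Real.continuous_rpow_const hα.le
  have hw : Continuous fun t : ℝ => a ^ (1 - t) * b ^ t :=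
    ((Real.continuous_const_rpow ha.ne').comp (by fun_prop)).mul
      (Real.continuous_const_rpow hb.ne')
  have h := subst_int ha hab (φ := fun t => t ^ α * A + m * (1 - t ^ α) * B) (by fun_prop)
  unfold majP
  rw [h, ← int_weight ha hab]
  congr 1
  unfold G
  rw [← intervalIntegral.integral_const_mul, ← intervalIntegral.integral_mul_const,
    ← intervalIntegral.integral_add]
  · refine intervalIntegral.integral_congr fun t _ => ?_
    simp only [one_mul]
    ring
  · exact (hw.const_mul _).intervalIntegrable _ _
  · have : (fun t : ℝ => t ^ α * a ^ (1 * (1 - t)) * b ^ (1 * t) * (A - m * B)) =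
        fun t : ℝ => t ^ α * (a ^ (1 - t) * b ^ t) * (A - m * B) := by
      funext t; simp only [one_mul]; ring
    rw [this]
    exact ((hc.mul hw).mul continuous_const).intervalIntegrable _ _

lemma memLp_of_contOn {a b : ℝ} {u : ℝ → ℝ} (hu : ContinuousOn u (Icc a b)) (p : ENNReal) :
    MemLp u p (volume.restrict (Ioc a b)) := by
  obtain ⟨C, hC⟩ := isCompact_Icc.exists_bound_of_continuousOn hu
  refine MemLp.of_bound ((hu.mono Ioc_subset_Icc_self).aestronglyMeasurable measurableSet_Ioc) C ?_
  filter_upwards [ae_restrict_mem measurableSet_Ioc] with x hx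
  exact hC x (Ioc_subset_Icc_self hx)

theorem stmt_16 (f g : ℝ → ℝ) (a b q α₁ m₁ α₂ m₂ : ℝ) (ha : 0 < a) (hab : a < b)
    (hq : 1 < q) (hα₁ : α₁ ∈ Ioc (0:ℝ) 1) (hm₁ : m₁ ∈ Ioc (0:ℝ) 1)
    (hα₂ : α₂ ∈ Ioc (0:ℝ) 1) (hm₂ : m₂ ∈ Ioc (0:ℝ) 1)
    (hf0 : ∀ x ∈ Ici (0:ℝ), 0 ≤ f x) (hg0 : ∀ x ∈ Ici (0:ℝ), 0 ≤ g x)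
    (hfg : IntervalIntegrable (fun x => f x * g x) volume a b)
    (hfconv : GAConvexOn α₁ m₁ (max (a ^ (1/m₁)) b) (fun x => f x ^ q))
    (hgconv : GAConvexOn α₂ m₂ (max (a ^ (1/m₂)) b) (fun x => g x ^ (q / (q - 1)))) :
    ∫ x in a..b, f x * g x ≤
      (Real.log b - Real.log a) *
        (m₁ * f (a ^ (1/m₁)) ^ q * L a b +
          G a b α₁ 1 * (f b ^ q - m₁ * f (a ^ (1/m₁)) ^ q)) ^ (1/q) *
        (m₂ * g (a ^ (1/m₂)) ^ (q / (q - 1)) * L a b +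
          G a b α₂ 1 * (g b ^ (q / (q - 1)) - m₂ * g (a ^ (1/m₂)) ^ (q / (q - 1)))) ^ (1 - 1/q) := by
  have hb : 0 < b := ha.trans hab
  have hd : 0 < Real.log b - Real.log a := sub_pos.2 (Real.log_lt_log ha hab)
  have hconj : q.HolderConjugate (q / (q - 1)) :=
    (Real.holderConjugate_iff_eq_conjExponent hq).2 rfl
  have hp0 : 0 < q / (q - 1) := hconj.symm.pos
  have hq0 : 0 < q := by linarith
  have hpe : 1 - 1 / q = 1 / (q / (q - 1)) := by
    have := hconj.inv_add_inv_eq_one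
    simp only [one_div]
    linarith
  rw [hpe]
  generalize q / (q - 1) = p at *
  have hA := fun x (hx : x ∈ Icc a b) => le_majP ha hab hm₁.1 hfconv hx
  have hB := fun x (hx : x ∈ Icc a b) => le_majP ha hab hm₂.1 hgconv hx
  have hAc := majP_cont (b := b) (m := m₁) (A := f b ^ q) (B := f (a ^ (1/m₁)) ^ q) ha hα₁.1
  have hBc := majP_cont (b := b) (m := m₂) (A := g b ^ p) (B := g (a ^ (1/m₂)) ^ p) ha hα₂.1
  have hAi := int_majP (m := m₁) (A := f b ^ q) (B := f (a ^ (1/m₁)) ^ q) ha hab hα₁.1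
  have hBi := int_majP (m := m₂) (A := g b ^ p) (B := g (a ^ (1/m₂)) ^ p) ha hab hα₂.1
  generalize majP a b α₁ m₁ (f b ^ q) (f (a ^ (1/m₁)) ^ q) = F at *
  generalize majP a b α₂ m₂ (g b ^ p) (g (a ^ (1/m₂)) ^ p) = H at *
  have hf0' : ∀ x ∈ Icc a b, 0 ≤ f x := fun x hx => hf0 x (ha.le.trans hx.1)
  have hg0' : ∀ x ∈ Icc a b, 0 ≤ g x := fun x hx => hg0 x (ha.le.trans hx.1)
  have hF0 : ∀ x ∈ Icc a b, 0 ≤ F x := fun x hx =>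
    (Real.rpow_nonneg (hf0' x hx) _).trans (hA x hx)
  have hH0 : ∀ x ∈ Icc a b, 0 ≤ H x := fun x hx =>
    (Real.rpow_nonneg (hg0' x hx) _).trans (hB x hx)
  have root : ∀ {u v r : ℝ}, 0 < r → 0 ≤ u → u ^ r ≤ v → u ≤ v ^ (1 / r) := by
    intro u v r hr hu huv
    have := Real.rpow_le_rpow (Real.rpow_nonneg hu r) huv (one_div_pos.2 hr).le
    rwa [← Real.rpow_mul hu, mul_one_div_cancel hr.ne', Real.rpow_one] at this
  have hFc : ContinuousOn (fun x => F x ^ (1 / q)) (Icc a b) :=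
    hAc.rpow_const fun x _ => Or.inr (one_div_pos.2 hq0).le
  have hHc : ContinuousOn (fun x => H x ^ (1 / p)) (Icc a b) :=
    hBc.rpow_const fun x _ => Or.inr (one_div_pos.2 hp0).le
  have step1 : ∫ x in a..b, f x * g x ≤ ∫ x in a..b, F x ^ (1 / q) * H x ^ (1 / p) := by
    refine intervalIntegral.integral_mono_on hab.le hfg ?_ ?_
    · refine ContinuousOn.intervalIntegrable ?_
      rw [uIcc_of_le hab.le]
      exact hFc.mul hHc
    · intro x hx
      exact mul_le_mul (root hq0 (hf0' x hx) (hA x hx)) (root hp0 (hg0' x hx) (hB x hx))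
        (hg0' x hx) (Real.rpow_nonneg (hF0 x hx) _)
  have back : ∀ {K : ℝ → ℝ} {r : ℝ}, 0 < r → (∀ x ∈ Icc a b, 0 ≤ K x) →
      ∫ x in Ioc a b, (K x ^ (1 / r)) ^ r = ∫ x in a..b, K x := by
    intro K r hr hK
    rw [intervalIntegral.integral_of_le hab.le]
    refine setIntegral_congr_fun measurableSet_Ioc fun x hx => ?_
    rw [← Real.rpow_mul (hK x (Ioc_subset_Icc_self hx)), one_div_mul_cancel hr.ne', Real.rpow_one]
  have step2 := integral_mul_le_Lp_mul_Lq_of_nonneg (μ := volume.restrict (Ioc a b)) hconj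
    (f := fun x => F x ^ (1 / q)) (g := fun x => H x ^ (1 / p))
    (by
      filter_upwards [ae_restrict_mem measurableSet_Ioc] with x hx
      exact Real.rpow_nonneg (hF0 x (Ioc_subset_Icc_self hx)) _)
    (by
      filter_upwards [ae_restrict_mem measurableSet_Ioc] with x hx
      exact Real.rpow_nonneg (hH0 x (Ioc_subset_Icc_self hx)) _)
    (memLp_of_contOn hFc _) (memLp_of_contOn hHc _)
  rw [back hq0 hF0, back hp0 hH0, ← intervalIntegral.integral_of_le hab.le] at step2
  have nF : 0 ≤ ∫ x in a..b, F x := intervalIntegral.integral_nonneg hab.le hF0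
  have nH : 0 ≤ ∫ x in a..b, H x := intervalIntegral.integral_nonneg hab.le hH0
  rw [hAi] at nF step2
  rw [hBi] at nH step2
  have nF' := nonneg_of_mul_nonneg_right nF hd
  have nH' := nonneg_of_mul_nonneg_right nH hd
  refine (step1.trans step2).trans (le_of_eq ?_)
  rw [Real.mul_rpow hd.le nF', Real.mul_rpow hd.le nH', mul_mul_mul_comm, ← Real.rpow_add hd,
    ← hpe, add_sub_cancel, Real.rpow_one, ← mul_assoc (Real.log b - Real.log a)]
end

section
/- Let f, g : [0,∞) → [0,∞) with f·g Lebesgue integrable on [a,b], where 0 < a < b < ∞, and let q > 1. If f^q and g^{q/(q−1)} are both (1,1)-GA-convex on [0,b] (i.e. GA-convex), then ∫_a^b f(x)·g(x) dx ≤ { f^q(a)·[L(a,b) − a] + [b − L(a,b)]·f^q(b) }^{1/q} · { g^{q/(q−1)}(a)·[L(a,b) − a] + [b − L(a,b)]·g^{q/(q−1)}(b) }^{1−1/q}. -/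
open Real MeasureTheory Set

lemma ga_bound (h : ℝ → ℝ) (a b x : ℝ) (ha : 0 < a) (hab : a < b) (hx : x ∈ Icc a b)
    (hc : GAConvexOn 1 1 b h) :
    h x ≤ (Real.log b - Real.log x) / (Real.log b - Real.log a) * h a +
      (1 - (Real.log b - Real.log x) / (Real.log b - Real.log a)) * h b := by
  have hb : 0 < b := ha.trans hab
  have hx0 : 0 < x := ha.trans_le hx.1
  have hD : 0 < Real.log b - Real.log a := sub_pos.2 (Real.log_lt_log ha hab)
  have h1 := Real.log_le_log ha hx.1
  have h2 := Real.log_le_log hx0 hx.2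
  set l := (Real.log b - Real.log x) / (Real.log b - Real.log a) with hl
  have hl0 : 0 ≤ l := div_nonneg (by linarith) hD.le
  have hl1 : l ≤ 1 := by rw [hl, div_le_one hD]; linarith
  have key := hc a ⟨ha.le, hab.le⟩ b ⟨hb.le, le_rfl⟩ l ⟨hl0, hl1⟩
  have hxe : a ^ l * b ^ (1 * (1 - l)) = x := by
    rw [Real.rpow_def_of_pos ha, Real.rpow_def_of_pos hb, ← Real.exp_add]
    have : Real.log a * l + Real.log b * (1 * (1 - l)) = Real.log x := by
      have : l * (Real.log b - Real.log a) = Real.log b - Real.log x := by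
        rw [hl]; field_simp
      linarith
    rw [this, Real.exp_log hx0]
  rw [hxe] at key
  simpa using key

lemma ga_integral (A B a b : ℝ) (ha : 0 < a) (hab : a < b) :
    ∫ x in a..b, ((Real.log b - Real.log x) / (Real.log b - Real.log a) * A +
      (1 - (Real.log b - Real.log x) / (Real.log b - Real.log a)) * B) =
      A * (L a b - a) + (b - L a b) * B := by
  have hD : 0 < Real.log b - Real.log a := sub_pos.2 (Real.log_lt_log ha hab)
  have : ∀ x : ℝ, ((Real.log b - Real.log x) / (Real.log b - Real.log a) * A +
      (1 - (Real.log b - Real.log x) / (Real.log b - Real.log a)) * B) =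
      (B + Real.log b * (A - B) / (Real.log b - Real.log a)) -
        ((A - B) / (Real.log b - Real.log a)) * Real.log x := by
    intro x; field_simp; ring
  simp_rw [this]
  rw [intervalIntegral.integral_sub (by simp)
    (intervalIntegral.intervalIntegrable_log'.const_mul _), intervalIntegral.integral_const_mul,
    integral_log]
  simp only [intervalIntegral.integral_const, smul_eq_mul, L]
  field_simp
  ring

lemma ga_memLp (P : ℝ → ℝ) (a b p : ℝ) (hp : 0 < p) (hP : ContinuousOn P (Icc a b)) :
    MemLp (fun x => P x ^ (1 / p)) (ENNReal.ofReal p) (volume.restrict (Icc a b)) := by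
  have hc : ContinuousOn (fun x => P x ^ (1 / p)) (Icc a b) :=
    hP.rpow_const (fun x _ => Or.inr (by positivity))
  obtain ⟨C, hC⟩ := isCompact_Icc.exists_bound_of_continuousOn hc
  refine MemLp.of_bound (hc.aestronglyMeasurable measurableSet_Icc) C ?_
  exact (ae_restrict_iff' measurableSet_Icc).2 (Filter.Eventually.of_forall hC)

theorem stmt_17 (f g : ℝ → ℝ) (a b q : ℝ) (ha : 0 < a) (hab : a < b) (hq : 1 < q)
    (hf0 : ∀ x ∈ Ici (0:ℝ), 0 ≤ f x) (hg0 : ∀ x ∈ Ici (0:ℝ), 0 ≤ g x)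
    (hfg : IntervalIntegrable (fun x => f x * g x) volume a b)
    (hfconv : GAConvexOn 1 1 b (fun x => f x ^ q))
    (hgconv : GAConvexOn 1 1 b (fun x => g x ^ (q / (q - 1)))) :
    ∫ x in a..b, f x * g x ≤
      (f a ^ q * (L a b - a) + (b - L a b) * f b ^ q) ^ (1/q) *
        (g a ^ (q / (q - 1)) * (L a b - a) +
          (b - L a b) * g b ^ (q / (q - 1))) ^ (1 - 1/q) := by
  have hq0 : 0 < q := by linarith
  have hq1 : 0 < q - 1 := by linarith
  have hpq : q.HolderConjugate (q / (q - 1)) := Real.HolderConjugate.conjExponent hq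
  have he : 1 - 1 / q = 1 / (q / (q - 1)) := by field_simp
  rw [he]
  generalize q / (q - 1) = p at *
  have hp0 : 0 < p := hpq.symm.pos
  rw [← ga_integral _ _ a b ha hab, ← ga_integral _ _ a b ha hab]
  have hfb := fun x hx => ga_bound _ a b x ha hab hx hfconv
  have hgb := fun x hx => ga_bound _ a b x ha hab hx hgconv
  have hcont : ∀ A B : ℝ, ContinuousOn (fun x : ℝ =>
      ((Real.log b - Real.log x) / (Real.log b - Real.log a) * A +
      (1 - (Real.log b - Real.log x) / (Real.log b - Real.log a)) * B)) (Icc a b) := by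
    intro A B
    have : ContinuousOn Real.log (Icc a b) :=
      Real.continuousOn_log.mono (fun x hx => (ha.trans_le hx.1).ne')
    fun_prop
  have hPc := hcont (f a ^ q) (f b ^ q)
  have hQc := hcont (g a ^ p) (g b ^ p)
  set P : ℝ → ℝ := fun x => ((Real.log b - Real.log x) / (Real.log b - Real.log a) * f a ^ q +
      (1 - (Real.log b - Real.log x) / (Real.log b - Real.log a)) * f b ^ q)
  set Q : ℝ → ℝ := fun x => ((Real.log b - Real.log x) / (Real.log b - Real.log a) * g a ^ p +
      (1 - (Real.log b - Real.log x) / (Real.log b - Real.log a)) * g b ^ p)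
  have hfP : ∀ x ∈ Icc a b, f x ^ q ≤ P x := hfb
  have hgQ : ∀ x ∈ Icc a b, g x ^ p ≤ Q x := hgb
  have hf' : ∀ x ∈ Icc a b, 0 ≤ f x := fun x hx => hf0 x (ha.le.trans hx.1)
  have hg' : ∀ x ∈ Icc a b, 0 ≤ g x := fun x hx => hg0 x (ha.le.trans hx.1)
  have hP0 : ∀ x ∈ Icc a b, 0 ≤ P x := fun x hx => (Real.rpow_nonneg (hf' x hx) _).trans (hfP x hx)
  have hQ0 : ∀ x ∈ Icc a b, 0 ≤ Q x := fun x hx => (Real.rpow_nonneg (hg' x hx) _).trans (hgQ x hx)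
  have root : ∀ r u v : ℝ, 0 < r → 0 ≤ u → u ^ r ≤ v → u ≤ v ^ (1 / r) := by
    intro r u v hr hu h
    have := Real.rpow_le_rpow (Real.rpow_nonneg hu r) h (by positivity : 0 ≤ 1 / r)
    rwa [one_div, Real.rpow_rpow_inv hu hr.ne', ← one_div] at this
  have hPr : ContinuousOn (fun x => P x ^ (1 / q)) (Icc a b) :=
    hPc.rpow_const (fun x _ => Or.inr (by positivity))
  have hQr : ContinuousOn (fun x => Q x ^ (1 / p)) (Icc a b) :=
    hQc.rpow_const (fun x _ => Or.inr (by positivity))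
  have step1 : ∫ x in a..b, f x * g x ≤ ∫ x in a..b, P x ^ (1 / q) * Q x ^ (1 / p) := by
    refine intervalIntegral.integral_mono_on hab.le hfg ?_ ?_
    · apply ContinuousOn.intervalIntegrable
      rw [uIcc_of_le hab.le]
      exact hPr.mul hQr
    · intro x hx
      exact mul_le_mul (root _ _ _ hq0 (hf' x hx) (hfP x hx)) (root _ _ _ hp0 (hg' x hx) (hgQ x hx))
        (hg' x hx) (Real.rpow_nonneg (hP0 x hx) _)
  refine step1.trans ?_
  simp only [intervalIntegral.integral_of_le hab.le, ← integral_Icc_eq_integral_Ioc]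
  have H := integral_mul_le_Lp_mul_Lq_of_nonneg (μ := volume.restrict (Icc a b)) hpq
    (f := fun x => P x ^ (1 / q)) (g := fun x => Q x ^ (1 / p))
    ((ae_restrict_iff' measurableSet_Icc).2 (Filter.Eventually.of_forall
      fun x hx => Real.rpow_nonneg (hP0 x hx) _))
    ((ae_restrict_iff' measurableSet_Icc).2 (Filter.Eventually.of_forall
      fun x hx => Real.rpow_nonneg (hQ0 x hx) _))
    (ga_memLp P a b q hq0 hPc) (ga_memLp Q a b p hp0 hQc)
  have e1 : ∫ x in Icc a b, (P x ^ (1 / q)) ^ q = ∫ x in Icc a b, P x :=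
    setIntegral_congr_fun measurableSet_Icc fun x hx => by
      simp only [one_div]
      exact Real.rpow_inv_rpow (hP0 x hx) hq0.ne'
  have e2 : ∫ x in Icc a b, (Q x ^ (1 / p)) ^ p = ∫ x in Icc a b, Q x :=
    setIntegral_congr_fun measurableSet_Icc fun x hx => by
      simp only [one_div]
      exact Real.rpow_inv_rpow (hQ0 x hx) hp0.ne'
  rw [e1, e2] at H
  exact H
end
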